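/- Let ε > 0 and r₀ > e. Suppose f : [0,∞) → ℝ is a warping function (C², f(0)=0, f'(0)=1, f(r) > 0 and f''(r) ≥ 0 for all r > 0) satisfying f''(r) ≥ ((1 + ε)/(r² log r)) · f(r) for all r ≥ r₀. Then ∫₁^∞ f(s)^{−1} (∫_s^∞ f(t)^{−1} dt) ds < ∞; in particular, for every s ≥ 1 the inner integral ∫_s^∞ f(t)^{−1} dt is finite. -/

import Mathlib

open MeasureTheory Set

/-!
Put `q r = (1 + ε) / (r² log r)` and `p = √(1 + ε) > 1`. Beyond `r = e` the function
`h r = r (log r)ᵖ` satisfies `h'' ≤ q h`, and so does `h + B` for every constant `B ≥ 0`, because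
`q ≥ 0`. Convexity and `f 0 = 0 < f r` give `f' r > 0` for `r > 0`. Fix a large `r₀`, and take `B`
so large that the Wronskian `f' (h + B) - f h'` is nonnegative at `r₀`. Since `f'' ≥ q f`, the
Wronskian is nondecreasing on `[r₀, ∞)`, hence so is `f / (h + B)`. Thus `f` grows at least like
`r (log r)ᵖ`, whose reciprocal is integrable at infinity.
-/

open Filter Asymptotics
open scoped ENNReal

section SturmComparison

variable {r₀ : ℝ} {f f' f'' g g' g'' : ℝ → ℝ}

lemma monotoneOn_Ici_of_hasDerivAt_nonneg (hf : ∀ r ∈ Ici r₀, HasDerivAt f (f' r) r)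
    (hf'_nonneg : ∀ r ∈ Ici r₀, 0 ≤ f' r) : MonotoneOn f (Ici r₀) :=
  monotoneOn_of_hasDerivWithinAt_nonneg (convex_Ici r₀)
    (fun r hr ↦ (hf r hr).continuousAt.continuousWithinAt)
    (fun r hr ↦ (hf r (interior_subset hr)).hasDerivWithinAt)
    (fun r hr ↦ hf'_nonneg r (interior_subset hr))

lemma monotoneOn_wronskian (hf : ∀ r ∈ Ici r₀, HasDerivAt f (f' r) r)
    (hf' : ∀ r ∈ Ici r₀, HasDerivAt f' (f'' r) r) (hg : ∀ r ∈ Ici r₀, HasDerivAt g (g' r) r)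
    (hg' : ∀ r ∈ Ici r₀, HasDerivAt g' (g'' r) r)
    (hfg : ∀ r ∈ Ici r₀, f r * g'' r ≤ f'' r * g r) :
    MonotoneOn (fun r ↦ f' r * g r - f r * g' r) (Ici r₀) := by
  refine monotoneOn_Ici_of_hasDerivAt_nonneg (f' := fun r ↦ f'' r * g r - f r * g'' r)
    (fun r hr ↦ ?_) (fun r hr ↦ sub_nonneg.2 (hfg r hr))
  exact (((hf' r hr).mul (hg r hr)).sub ((hf r hr).mul (hg' r hr))).congr_deriv (by ring)

lemma monotoneOn_div_of_wronskian_nonneg (hf : ∀ r ∈ Ici r₀, HasDerivAt f (f' r) r)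
    (hf' : ∀ r ∈ Ici r₀, HasDerivAt f' (f'' r) r) (hg : ∀ r ∈ Ici r₀, HasDerivAt g (g' r) r)
    (hg' : ∀ r ∈ Ici r₀, HasDerivAt g' (g'' r) r)
    (hfg : ∀ r ∈ Ici r₀, f r * g'' r ≤ f'' r * g r)
    (hg_ne : ∀ r ∈ Ici r₀, g r ≠ 0) (hr₀ : 0 ≤ f' r₀ * g r₀ - f r₀ * g' r₀) :
    MonotoneOn (fun r ↦ f r / g r) (Ici r₀) := by
  refine monotoneOn_Ici_of_hasDerivAt_nonneg
    (fun r hr ↦ (hf r hr).div (hg r hr) (hg_ne r hr)) (fun r hr ↦ ?_)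
  have wronskian_nonneg : 0 ≤ f' r * g r - f r * g' r :=
    hr₀.trans (monotoneOn_wronskian hf hf' hg hg' hfg self_mem_Ici hr hr)
  positivity

end SturmComparison

section Subsolution

variable {q f f' f'' h h' h'' : ℝ → ℝ}

lemma exists_pos_forall_mul_le_of_subsolution {r₀ : ℝ} (hq : ∀ r ∈ Ici r₀, 0 ≤ q r)
    (hf_pos : ∀ r ∈ Ici r₀, 0 < f r) (hh_nonneg : ∀ r ∈ Ici r₀, 0 ≤ h r)
    (hf : ∀ r ∈ Ici r₀, HasDerivAt f (f' r) r) (hf' : ∀ r ∈ Ici r₀, HasDerivAt f' (f'' r) r)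
    (hh : ∀ r ∈ Ici r₀, HasDerivAt h (h' r) r) (hh' : ∀ r ∈ Ici r₀, HasDerivAt h' (h'' r) r)
    (hf_super : ∀ r ∈ Ici r₀, q r * f r ≤ f'' r) (hh_sub : ∀ r ∈ Ici r₀, h'' r ≤ q r * h r)
    (hf'_pos : 0 < f' r₀) : ∃ c > 0, ∀ r ∈ Ici r₀, c * h r ≤ f r := by
  have hf₀ : 0 < f r₀ := hf_pos r₀ self_mem_Ici
  obtain ⟨B, hB, hB_large⟩ : ∃ B > 0, f r₀ * h' r₀ ≤ f' r₀ * B := by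
    refine ⟨f r₀ * |h' r₀| / f' r₀ + 1, by positivity, ?_⟩
    rw [mul_add, mul_div_cancel₀ _ hf'_pos.ne']
    linarith [mul_le_mul_of_nonneg_left (le_abs_self (h' r₀)) hf₀.le]
  have hg_pos : ∀ r ∈ Ici r₀, 0 < h r + B := fun r hr ↦ add_pos_of_nonneg_of_pos (hh_nonneg r hr) hB
  have hfg : ∀ r ∈ Ici r₀, f r * h'' r ≤ f'' r * (h r + B) := fun r hr ↦
    calc f r * h'' r ≤ f r * (q r * h r) := by gcongr; exacts [(hf_pos r hr).le, hh_sub r hr]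
      _ ≤ f r * (q r * (h r + B)) := by
        gcongr
        exacts [(hf_pos r hr).le, hq r hr, le_add_of_nonneg_right hB.le]
      _ = q r * f r * (h r + B) := by ring
      _ ≤ f'' r * (h r + B) := by gcongr; exacts [(hg_pos r hr).le, hf_super r hr]
  have wronskian_nonneg : 0 ≤ f' r₀ * (h r₀ + B) - f r₀ * h' r₀ := by
    linarith [mul_nonneg hf'_pos.le (hh_nonneg r₀ self_mem_Ici)]
  have div_mono : MonotoneOn (fun r ↦ f r / (h r + B)) (Ici r₀) :=
    monotoneOn_div_of_wronskian_nonneg hf hf' (fun r hr ↦ (hh r hr).add_const B) hh' hfg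
      (fun r hr ↦ (hg_pos r hr).ne') wronskian_nonneg
  have hc : 0 < f r₀ / (h r₀ + B) := div_pos hf₀ (hg_pos r₀ self_mem_Ici)
  refine ⟨f r₀ / (h r₀ + B), hc, fun r hr ↦ ?_⟩
  calc f r₀ / (h r₀ + B) * h r ≤ f r₀ / (h r₀ + B) * (h r + B) := by gcongr; linarith
    _ ≤ f r := (le_div_iff₀ (hg_pos r hr)).1 (div_mono self_mem_Ici hr hr)

lemma isBigO_atTop_of_subsolution (hq : ∀ᶠ r in atTop, 0 ≤ q r)
    (hf_pos : ∀ᶠ r in atTop, 0 < f r) (hh_nonneg : ∀ᶠ r in atTop, 0 ≤ h r)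
    (hf : ∀ᶠ r in atTop, HasDerivAt f (f' r) r) (hf' : ∀ᶠ r in atTop, HasDerivAt f' (f'' r) r)
    (hh : ∀ᶠ r in atTop, HasDerivAt h (h' r) r) (hh' : ∀ᶠ r in atTop, HasDerivAt h' (h'' r) r)
    (hf_super : ∀ᶠ r in atTop, q r * f r ≤ f'' r) (hh_sub : ∀ᶠ r in atTop, h'' r ≤ q r * h r)
    (hf'_pos : ∃ᶠ r in atTop, 0 < f' r) : h =O[atTop] f := by
  obtain ⟨r₀, hr₀, hall⟩ := (hf'_pos.and_eventually <| eventually_forall_ge_atTop.2 <|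
    hq.and <| hf_pos.and <| hh_nonneg.and <| hf.and <| hf'.and <| hh.and <| hh'.and <|
    hf_super.and hh_sub).exists
  simp only [forall_and] at hall
  obtain ⟨hq, hf_pos, hh_nonneg, hf, hf', hh, hh', hf_super, hh_sub⟩ := hall
  obtain ⟨c, hc, hcf⟩ := exists_pos_forall_mul_le_of_subsolution hq hf_pos hh_nonneg hf hf' hh hh'
    hf_super hh_sub hr₀
  refine .of_bound c⁻¹ ?_
  filter_upwards [eventually_ge_atTop r₀] with r hr
  rw [Real.norm_of_nonneg (hh_nonneg r hr), Real.norm_of_nonneg (hf_pos r hr).le,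
    le_inv_mul_iff₀ hc]
  exact hcf r hr

end Subsolution

section MulLogRpow

variable {p r : ℝ}

lemma hasDerivAt_log_rpow (p : ℝ) (hr : 1 < r) :
    HasDerivAt (fun x ↦ Real.log x ^ p) (p * Real.log r ^ (p - 1) / r) r :=
  ((Real.hasDerivAt_log (zero_lt_one.trans hr).ne').rpow_const
    (Or.inl (Real.log_pos hr).ne')).congr_deriv (by ring)

lemma hasDerivAt_mul_log_rpow (p : ℝ) (hr : 1 < r) :
    HasDerivAt (fun x ↦ x * Real.log x ^ p) (Real.log r ^ p + p * Real.log r ^ (p - 1)) r := by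
  have hr_ne : r ≠ 0 := by positivity
  refine ((hasDerivAt_id r).mul (hasDerivAt_log_rpow p hr)).congr_deriv ?_
  rw [id, one_mul, mul_div_cancel₀ _ hr_ne]

lemma hasDerivAt_log_rpow_add_mul_log_rpow_sub_one (p : ℝ) (hr : 1 < r) :
    HasDerivAt (fun x ↦ Real.log x ^ p + p * Real.log x ^ (p - 1))
      ((p * Real.log r ^ (p - 1) + p * (p - 1) * Real.log r ^ (p - 1 - 1)) / r) r :=
  ((hasDerivAt_log_rpow p hr).add ((hasDerivAt_log_rpow (p - 1) hr).const_mul p)).congr_deriv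
    (by ring)

lemma deriv_deriv_mul_log_rpow_le (hp : 1 ≤ p) (hr : Real.exp 1 ≤ r) :
    (p * Real.log r ^ (p - 1) + p * (p - 1) * Real.log r ^ (p - 1 - 1)) / r ≤
      p ^ 2 / (r ^ 2 * Real.log r) * (r * Real.log r ^ p) := by
  have hr_pos : 0 < r := (Real.exp_pos 1).trans_le hr
  have one_le_log : 1 ≤ Real.log r := (Real.le_log_iff_exp_le hr_pos).2 hr
  have log_ne : Real.log r ≠ 0 := by positivity
  calc (p * Real.log r ^ (p - 1) + p * (p - 1) * Real.log r ^ (p - 1 - 1)) / r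
      = p * Real.log r ^ p / (r * Real.log r) * (1 + (p - 1) / Real.log r) := by
        simp only [Real.rpow_sub_one log_ne]
        field_simp
    _ ≤ p * Real.log r ^ p / (r * Real.log r) * (1 + (p - 1)) := by
        gcongr
        exact div_le_self (sub_nonneg.2 hp) one_le_log
    _ = p ^ 2 / (r ^ 2 * Real.log r) * (r * Real.log r ^ p) := by
        field_simp
        ring

lemma integrableOn_inv_mul_log_rpow_Ioi {c : ℝ} (hp : 1 < p) (hc : 1 < c) :
    IntegrableOn (fun r ↦ (r * Real.log r ^ p)⁻¹) (Ioi c) := by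
  have hp_sub : 0 < p - 1 := sub_pos.2 hp
  have hasDerivAt_primitive : ∀ r ∈ Ici c,
      HasDerivAt (fun x ↦ -(Real.log x ^ (-(p - 1)) / (p - 1))) ((r * Real.log r ^ p)⁻¹) r := by
    intro r hr
    have hr_one : 1 < r := hc.trans_le hr
    have log_pos : 0 < Real.log r := Real.log_pos hr_one
    refine ((hasDerivAt_log_rpow (-(p - 1)) hr_one).div_const (p - 1)).neg.congr_deriv ?_
    rw [show -(p - 1) - 1 = -p by ring, Real.rpow_neg log_pos.le]
    field_simp
  refine integrableOn_Ioi_deriv_of_nonneg' hasDerivAt_primitive (fun r hr ↦ ?_)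
    (((tendsto_rpow_neg_atTop hp_sub).comp Real.tendsto_log_atTop).div_const (p - 1)).neg
  have hr_one : 1 < r := hc.trans hr
  have log_pos : 0 < Real.log r := Real.log_pos hr_one
  positivity

lemma isBigO_mul_log_rpow_of_curvature_bound {f : ℝ → ℝ} (hp : 1 ≤ p)
    (hf_pos : ∀ᶠ r in atTop, 0 < f r) (hf : ∀ᶠ r in atTop, DifferentiableAt ℝ f r)
    (hf' : ∀ᶠ r in atTop, DifferentiableAt ℝ (deriv f) r)
    (hcurv : ∀ᶠ r in atTop, p ^ 2 / (r ^ 2 * Real.log r) * f r ≤ deriv (deriv f) r)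
    (hf'_pos : ∃ᶠ r in atTop, 0 < deriv f r) :
    (fun r ↦ r * Real.log r ^ p) =O[atTop] f := by
  have one_lt : ∀ᶠ r : ℝ in atTop, 1 < r := eventually_gt_atTop 1
  have log_nonneg : ∀ᶠ r in atTop, 0 ≤ Real.log r := one_lt.mono fun r hr ↦ Real.log_nonneg hr.le
  refine isBigO_atTop_of_subsolution (log_nonneg.mono fun r hr ↦ by positivity) hf_pos ?_
    (hf.mono fun r hr ↦ hr.hasDerivAt) (hf'.mono fun r hr ↦ hr.hasDerivAt)
    (one_lt.mono fun r ↦ hasDerivAt_mul_log_rpow p)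
    (one_lt.mono fun r ↦ hasDerivAt_log_rpow_add_mul_log_rpow_sub_one p) hcurv
    ((eventually_ge_atTop (Real.exp 1)).mono fun r ↦ deriv_deriv_mul_log_rpow_le hp) hf'_pos
  filter_upwards [one_lt, log_nonneg] with r hr hlog
  positivity

lemma integrableOn_inv_Ioi_of_isBigO_mul_log_rpow {a : ℝ} {f : ℝ → ℝ} (hp : 1 < p)
    (hf : ContinuousOn f (Ici a)) (hf_ne : ∀ r ∈ Ici a, f r ≠ 0)
    (hO : (fun r ↦ r * Real.log r ^ p) =O[atTop] f) :
    IntegrableOn (fun r ↦ (f r)⁻¹) (Ioi a) := by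
  have mul_log_rpow_ne : ∀ᶠ r in atTop, r * Real.log r ^ p ≠ 0 := by
    filter_upwards [eventually_gt_atTop 1] with r hr
    have log_pos : 0 < Real.log r := Real.log_pos hr
    positivity
  have integrableAtFilter : IntegrableAtFilter (fun r ↦ (r * Real.log r ^ p)⁻¹) atTop :=
    ⟨Ioi 2, Ioi_mem_atTop 2, integrableOn_inv_mul_log_rpow_Ioi hp one_lt_two⟩
  exact (((hf.inv₀ hf_ne).locallyIntegrableOn measurableSet_Ici).integrableOn_of_isBigO_atTop
    (hO.inv_rev (mul_log_rpow_ne.mono fun r hr h ↦ absurd h hr)) integrableAtFilter).mono_set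
    Ioi_subset_Ici_self

end MulLogRpow

lemma setLIntegral_mul_setLIntegral_Ioi_lt_top {φ : ℝ → ℝ≥0∞} {a : ℝ}
    (hφ : ∫⁻ t in Ioi a, φ t < ⊤) : ∫⁻ s in Ioi a, φ s * ∫⁻ t in Ioi s, φ t < ⊤ :=
  calc ∫⁻ s in Ioi a, φ s * ∫⁻ t in Ioi s, φ t
      ≤ ∫⁻ s in Ioi a, φ s * ∫⁻ t in Ioi a, φ t :=
        setLIntegral_mono' measurableSet_Ioi fun _ hs ↦
          mul_le_mul_right (lintegral_mono_set (Ioi_subset_Ioi (le_of_lt hs))) _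
    _ = (∫⁻ s in Ioi a, φ s) * ∫⁻ t in Ioi a, φ t := lintegral_mul_const' _ _ hφ.ne
    _ < ⊤ := ENNReal.mul_lt_top hφ hφ

lemma deriv_pos_of_deriv_deriv_nonneg_of_lt {f : ℝ → ℝ} {x y : ℝ} (hf : Differentiable ℝ f)
    (hf' : Differentiable ℝ (deriv f)) (hf''_nonneg : ∀ z > x, 0 ≤ deriv (deriv f) z)
    (hxy : x < y) (hfxy : f x < f y) : 0 < deriv f y := by
  have hf_convex : ConvexOn ℝ (Ici x) f :=
    convexOn_of_deriv2_nonneg (convex_Ici x) hf.continuous.continuousOn hf.differentiableOn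
      hf'.differentiableOn (by rwa [interior_Ici])
  calc 0 < slope f x y := by
        rw [slope_def_field]
        exact div_pos (sub_pos.2 hfxy) (sub_pos.2 hxy)
    _ ≤ deriv f y := hf_convex.slope_le_deriv self_mem_Ici hxy.le hxy (hf y)

theorem stmt_1_general {a ε : ℝ} {f : ℝ → ℝ} (hε : 0 < ε) (hf_cont : ContinuousOn f (Ici a))
    (hf_pos : ∀ r ∈ Ici a, 0 < f r) (hf : ∀ᶠ r in atTop, DifferentiableAt ℝ f r)
    (hf' : ∀ᶠ r in atTop, DifferentiableAt ℝ (deriv f) r)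
    (hcurv : ∀ᶠ r in atTop, (1 + ε) / (r ^ 2 * Real.log r) * f r ≤ deriv (deriv f) r)
    (hf'_pos : ∃ᶠ r in atTop, 0 < deriv f r) :
    (∫⁻ s in Ioi a, ENNReal.ofReal ((f s)⁻¹) * ∫⁻ t in Ioi s, ENNReal.ofReal ((f t)⁻¹)) < ⊤ ∧
      ∀ s ≥ a, (∫⁻ t in Ioi s, ENNReal.ofReal ((f t)⁻¹)) < ⊤ := by
  have one_lt_sqrt : 1 < √(1 + ε) := Real.lt_sqrt_of_sq_lt (by linarith)
  have growth : (fun r ↦ r * Real.log r ^ √(1 + ε)) =O[atTop] f := by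
    refine isBigO_mul_log_rpow_of_curvature_bound one_lt_sqrt.le
      ((eventually_ge_atTop a).mono hf_pos) hf hf' ?_ hf'_pos
    rwa [Real.sq_sqrt (by linarith)]
  have lintegral_lt_top : ∫⁻ t in Ioi a, ENNReal.ofReal ((f t)⁻¹) < ⊤ :=
    (integrableOn_inv_Ioi_of_isBigO_mul_log_rpow one_lt_sqrt hf_cont
      (fun r hr ↦ (hf_pos r hr).ne') growth).lintegral_lt_top
  exact ⟨setLIntegral_mul_setLIntegral_Ioi_lt_top lintegral_lt_top, fun s hs ↦
    (lintegral_mono_set (Ioi_subset_Ioi hs)).trans_lt lintegral_lt_top⟩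

/-- For a warping function `f` (C², f(0)=0, f'(0)=1, f>0 and f''≥0 on (0,∞))
satisfying the curvature bound `f''(r) ≥ ((1+ε)/(r² log r)) f(r)` for `r ≥ r₀ > e`,
the integral `∫₁^∞ f(s)⁻¹ (∫ₛ^∞ f(t)⁻¹ dt) ds` is finite; in particular every inner
integral is finite. -/
theorem stmt_1 (ε r₀ : ℝ) (hε : 0 < ε) (hr₀ : Real.exp 1 < r₀)
    (f : ℝ → ℝ) (hf : ContDiff ℝ 2 f) (hf0 : f 0 = 0) (hf'0 : deriv f 0 = 1)
    (hfpos : ∀ r > (0:ℝ), 0 < f r) (hfconv : ∀ r > (0:ℝ), 0 ≤ deriv (deriv f) r)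
    (hcurv : ∀ r ≥ r₀, ((1 + ε) / (r ^ 2 * Real.log r)) * f r ≤ deriv (deriv f) r) :
    (∫⁻ s in Ioi (1:ℝ),
        ENNReal.ofReal ((f s)⁻¹) * ∫⁻ t in Ioi s, ENNReal.ofReal ((f t)⁻¹)) < ⊤ ∧
      ∀ s ≥ (1:ℝ), (∫⁻ t in Ioi s, ENNReal.ofReal ((f t)⁻¹)) < ⊤ := by
  have hf_diff : Differentiable ℝ f := hf.differentiable two_ne_zero
  have hf'_diff : Differentiable ℝ (deriv f) := hf.differentiable_deriv_two
  exact stmt_1_general hε hf.continuous.continuousOn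
    (fun r hr ↦ hfpos r (zero_lt_one.trans_le hr)) (.of_forall hf_diff) (.of_forall hf'_diff)
    ((eventually_ge_atTop r₀).mono hcurv) ((eventually_gt_atTop 0).mono fun r hr ↦
      deriv_pos_of_deriv_deriv_nonneg_of_lt hf_diff hf'_diff hfconv hr
        (hf0.trans_lt (hfpos r hr))).frequently
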